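/- arXiv:1002.4854 — 2 statements merged into one kernel-verified Lean document; each statement's English description precedes it below -/
import Mathlib

section
/- Let 𝔤 be a finite-dimensional Lie algebra over a field k of characteristic 0, let (h,e,f) be an sl₂-triple in 𝔤 such that 𝔤(i) = 0 for every odd integer i (e is even), and suppose that (h/2, e', f') is also an sl₂-triple in 𝔤 for some e', f' ∈ 𝔤. Then dim ker(ad e') = dim ker((ad e)²) = dim 𝔤^e + dim 𝔤^e_nil. -/
open LieAlgebra Module

/-!
For an `sl₂`-triple acting on a finite-dimensional module `M`, write `M_i` for the eigenspaces of
`h` and `M_{≥ n}` for the sum of those with integer eigenvalue at least `n`. If `f e m = 0`, then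
`eⁿ fⁿ m = n! h (h - 1) ⋯ (h - n + 1) m`; as `f` is nilpotent, `m` is killed by a polynomial in `h`
with distinct roots in `ℕ`, so `m ∈ M_{≥ 0}`. Three consequences:

* `ker e ≤ M_{≥ 0}`;
* `e f` is injective on `M_i` for `i > 0` (exchange `e` and `f`), so that `e` maps `M_{≥ n}` onto
  `M_{≥ n + 2}` for `n ≥ -1`, and `dim (ker e ∩ M_{≥ n}) = dim M_n + dim M_{n + 1}`;
* `h` is injective on `ker e ∩ im e`, so that `ker e ∩ im e = ker e ∩ M_{≥ 1}`.

Hence `dim ker e² = dim ker e + dim (ker e ∩ M_{≥ 1}) = dim M_0 + 2 dim M_1 + dim M_2`. When `h / 2`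
belongs to a triple as well, its eigenvalues are integers, so `M_1 = 0`, and the kernel of `e'` has
dimension `dim M_0 + dim M_2`.
-/

section LinearAlgebra

open Polynomial

variable {k V : Type*} [Field k] [AddCommGroup V] [Module k V]

lemma lie_pow_eq_smul {R A : Type*} [CommRing R] [Ring A] [Algebra R A] {x a : A} {c : R}
    (hxa : ⁅x, a⁆ = c • a) (n : ℕ) : ⁅x, a ^ n⁆ = (n * c) • a ^ n := by
  induction n with
  | zero => simp [Ring.lie_def]
  | succ n ih =>
    have leibniz : ⁅x, a ^ (n + 1)⁆ = ⁅x, a ^ n⁆ * a + a ^ n * ⁅x, a⁆ := by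
      simp only [Ring.lie_def, pow_succ]
      noncomm_ring
    rw [leibniz, ih, hxa, smul_mul_assoc, mul_smul_comm, ← pow_succ, ← add_smul]
    push_cast
    ring_nf

lemma isNilpotent_of_lie_eq_smul {A : Type*} [CharZero k] [Ring A] [Algebra k A]
    [FiniteDimensional k A] {x a : A} {c : k} (hc : c ≠ 0) (hxa : ⁅x, a⁆ = c • a) :
    IsNilpotent a := by
  by_contra hnil
  let adX : End k A := LinearMap.mulLeft k x - LinearMap.mulRight k x
  have hasEigenvalue (n : ℕ) : adX.HasEigenvalue (n * c) :=
    End.hasEigenvalue_of_hasEigenvector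
      ⟨End.mem_eigenspace_iff.2 (lie_pow_eq_smul hxa n), fun h ↦ hnil ⟨n, h⟩⟩
  have injective : Function.Injective fun n : ℕ ↦ (n * c : k) :=
    (mul_left_injective₀ hc).comp Nat.cast_injective
  exact Set.infinite_of_injective_forall_mem injective hasEigenvalue adX.finite_hasEigenvalue

lemma ker_aeval_prod_X_sub_C {ι : Type*} (T : End k V) {a : ι → k} (ha : Function.Injective a)
    (s : Finset ι) :
    LinearMap.ker (aeval T (∏ i ∈ s, (X - C (a i)))) = ⨆ i ∈ s, T.eigenspace (a i) := by
  classical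
  induction s using Finset.induction_on with
  | empty => simp [LinearMap.ker_eq_bot', End.one_apply]
  | insert j s hj ih =>
    have coprime : IsCoprime (X - C (a j)) (∏ i ∈ s, (X - C (a i))) :=
      IsCoprime.prod_right fun i hi ↦ pairwise_coprime_X_sub_C ha (ne_of_mem_of_not_mem hi hj).symm
    rw [Finset.prod_insert hj, ← sup_ker_aeval_eq_ker_aeval_mul_of_coprime T coprime, ih,
      Finset.iSup_insert, End.eigenspace_def, map_sub, aeval_X, aeval_C,
      Algebra.algebraMap_eq_smul_one]

lemma eigenspace_smul (T : End k V) {c : k} (hc : c ≠ 0) (μ : k) :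
    (c • T).eigenspace μ = T.eigenspace (c⁻¹ * μ) := by
  ext x
  rw [End.mem_eigenspace_iff, End.mem_eigenspace_iff, LinearMap.smul_apply, mul_smul,
    eq_inv_smul_iff₀ hc]

lemma finrank_map_add_finrank_ker_inf {W : Type*} [AddCommGroup W] [Module k W]
    (T : V →ₗ[k] W) (p : Submodule k V) [FiniteDimensional k p] :
    finrank k (p.map T) + finrank k (LinearMap.ker T ⊓ p : Submodule k V) = finrank k p := by
  rw [← (T.domRestrict p).finrank_range_add_finrank_ker, LinearMap.range_domRestrict,
    LinearMap.ker_domRestrict, ← Submodule.finrank_map_subtype_eq, Submodule.map_comap_subtype,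
    inf_comm]

lemma finrank_ker_sq [FiniteDimensional k V] (T : End k V) :
    finrank k (LinearMap.ker (T ^ 2)) =
      finrank k (LinearMap.ker T) +
        finrank k (LinearMap.ker T ⊓ LinearMap.range T : Submodule k V) := by
  have ker_sq : LinearMap.ker (T ^ 2) = (LinearMap.ker T).comap T := by
    rw [pow_two, End.mul_eq_comp, LinearMap.ker_comp]
  have ker_le : LinearMap.ker T ≤ (LinearMap.ker T).comap T := LinearMap.ker_le_comap T
  rw [ker_sq, ← finrank_map_add_finrank_ker_inf T, Submodule.map_comap_eq, inf_eq_left.2 ker_le,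
    inf_comm (LinearMap.range T), add_comm]

/-- The sum of the eigenspaces of `T` whose eigenvalue is an integer at least `n`, for `T = ad h`
the sum of the `𝔤(i)` with `i ≥ n`. -/
def eigenspaceFiltration (T : End k V) (n : ℤ) : Submodule k V :=
  ⨆ i ∈ Set.Ici n, T.eigenspace (i : k)

variable (T : End k V) {i n : ℤ}

lemma eigenspace_le_eigenspaceFiltration (hi : n ≤ i) :
    T.eigenspace (i : k) ≤ eigenspaceFiltration T n :=
  le_biSup (fun j : ℤ ↦ T.eigenspace (j : k)) hi

variable {T} in
lemma eigenspaceFiltration_le_iff {p : Submodule k V} :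
    eigenspaceFiltration T n ≤ p ↔ ∀ i ≥ n, T.eigenspace (i : k) ≤ p :=
  iSup₂_le_iff

variable (n) in
lemma eigenspaceFiltration_eq_sup :
    eigenspaceFiltration T n = T.eigenspace (n : k) ⊔ eigenspaceFiltration T (n + 1) := by
  rw [eigenspaceFiltration, ← Set.Ioi_insert, iSup_insert]
  rfl

lemma map_eigenspaceFiltration_zero_le :
    (eigenspaceFiltration T 0).map T ≤ eigenspaceFiltration T 1 := by
  refine Submodule.map_le_iff_le_comap.2 (eigenspaceFiltration_le_iff.2 fun i hi x hx ↦ ?_)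
  rw [Submodule.mem_comap, End.mem_eigenspace_iff.1 hx]
  obtain rfl | hi := hi.eq_or_lt
  · simp
  · exact Submodule.smul_mem _ _ (eigenspace_le_eigenspaceFiltration T hi hx)

variable [CharZero k]

lemma disjoint_eigenspace_eigenspaceFiltration (hi : i < n) :
    Disjoint (T.eigenspace (i : k)) (eigenspaceFiltration T n) := by
  have indep := T.eigenspaces_iSupIndep.comp (Int.cast_injective (α := k))
  exact indep.disjoint_biSup (y := Set.Ici n) (by simpa using hi)

variable (n) in
lemma finrank_eigenspaceFiltration [FiniteDimensional k V] :
    finrank k (eigenspaceFiltration T n) =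
      finrank k (T.eigenspace (n : k)) + finrank k (eigenspaceFiltration T (n + 1)) := by
  have disjoint := disjoint_eigenspace_eigenspaceFiltration T (lt_add_one n)
  rw [← Submodule.finrank_sup_add_finrank_inf_eq, disjoint.eq_bot, finrank_bot, add_zero,
    ← eigenspaceFiltration_eq_sup]

end LinearAlgebra

namespace Sl2Module

open LieModule

section CommRing

open Polynomial

variable {R L M : Type*} [CommRing R] [LieRing L] [LieAlgebra R L]
  [AddCommGroup M] [Module R M] [LieRingModule L M] [LieModule R L M] {h e f : L}

lemma lie_e_mem_eigenspace (t : IsSl2Triple h e f) {μ : R} {m : M}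
    (hm : m ∈ (toEnd R L M h).eigenspace μ) : ⁅e, m⁆ ∈ (toEnd R L M h).eigenspace (μ + 2) := by
  rw [End.mem_eigenspace_iff, toEnd_apply_apply] at hm ⊢
  simpa using t.lie_h_pow_toEnd_e hm 1

lemma lie_f_mem_eigenspace (t : IsSl2Triple h e f) {μ : R} {m : M}
    (hm : m ∈ (toEnd R L M h).eigenspace μ) : ⁅f, m⁆ ∈ (toEnd R L M h).eigenspace (μ - 2) := by
  rw [End.mem_eigenspace_iff, toEnd_apply_apply] at hm ⊢
  rw [leibniz_lie, t.lie_lie_smul_f R, hm, lie_smul, neg_lie, smul_lie]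
  module

lemma lie_e_lie_h (t : IsSl2Triple h e f) (m : M) : ⁅e, ⁅h, m⁆⁆ = ⁅h, ⁅e, m⁆⁆ - 2 • ⁅e, m⁆ := by
  rw [leibniz_lie h, t.lie_h_e_nsmul, nsmul_lie, add_sub_cancel_left]

lemma lie_f_lie_e_lie_h (t : IsSl2Triple h e f) (m : M) :
    ⁅f, ⁅e, ⁅h, m⁆⁆⁆ = ⁅h, ⁅f, ⁅e, m⁆⁆⁆ := by
  rw [lie_e_lie_h t, leibniz_lie h f, t.lie_h_f_nsmul, lie_sub, lie_nsmul, neg_lie, nsmul_lie,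
    neg_add_eq_sub]

lemma lie_toEnd_h_toEnd_f (t : IsSl2Triple h e f) :
    ⁅toEnd R L M h, toEnd R L M f⁆ = (-2 : R) • toEnd R L M f := by
  ext m
  simp [Ring.lie_def, leibniz_lie h, t.lie_lie_smul_f R]

lemma lie_h_pow_toEnd_f (t : IsSl2Triple h e f) (n : ℕ) (m : M) :
    ⁅h, (toEnd R L M f ^ n) m⁆ = (toEnd R L M f ^ n) (⁅h, m⁆ - (2 * n : R) • m) := by
  have comm := LinearMap.congr_fun (lie_pow_eq_smul (lie_toEnd_h_toEnd_f (R := R) (M := M) t) n) m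
  rw [Ring.lie_def, LinearMap.sub_apply, sub_eq_iff_eq_add] at comm
  simp only [End.mul_apply, toEnd_apply_apply, LinearMap.smul_apply] at comm
  rw [comm, map_sub, map_smul]
  module

lemma lie_e_pow_succ_toEnd_f (t : IsSl2Triple h e f) (n : ℕ) (m : M) :
    ⁅e, (toEnd R L M f ^ (n + 1)) m⁆ = (toEnd R L M f ^ (n + 1)) ⁅e, m⁆ +
      (n + 1 : R) • (toEnd R L M f ^ n) (⁅h, m⁆ - (n : R) • m) := by
  induction n with
  | zero => simp [leibniz_lie e, t.lie_e_f, add_comm]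
  | succ n ih =>
    rw [pow_succ', End.mul_apply, toEnd_apply_apply, leibniz_lie, ih, t.lie_e_f,
      lie_h_pow_toEnd_f t]
    simp only [map_sub, map_smul, lie_add, lie_sub, lie_smul, pow_succ' _ n, End.mul_apply,
      toEnd_apply_apply]
    push_cast
    module

lemma pow_toEnd_e_pow_toEnd_f (t : IsSl2Triple h e f) {m : M} (hm : ⁅f, ⁅e, m⁆⁆ = 0) (n : ℕ) :
    (toEnd R L M e ^ n) ((toEnd R L M f ^ n) m) =
      (n.factorial : R) •
        aeval (toEnd R L M h) (∏ i ∈ Finset.range n, (X - C (i : R))) m := by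
  induction n generalizing m with
  | zero => simp
  | succ n ih =>
    have hm' : ⁅f, ⁅e, ⁅h, m⁆ - (n : R) • m⁆⁆ = 0 := by
      rw [lie_sub, lie_sub, lie_f_lie_e_lie_h t, lie_smul, lie_smul, hm, lie_zero, smul_zero,
        sub_zero]
    have lowest : (toEnd R L M f ^ (n + 1)) ⁅e, m⁆ = 0 := by
      rw [pow_succ, End.mul_apply, toEnd_apply_apply, hm, map_zero]
    rw [pow_succ, End.mul_apply, toEnd_apply_apply, lie_e_pow_succ_toEnd_f (R := R) t, lowest,
      zero_add, map_smul, ih hm', smul_smul, Finset.prod_range_succ, map_mul, End.mul_apply,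
      aeval_sub, aeval_X, aeval_C, LinearMap.sub_apply, algebraMap_end_apply, toEnd_apply_apply,
      Nat.factorial_succ, Nat.cast_mul, Nat.cast_succ]

end CommRing

variable {k L M : Type*} [Field k] [CharZero k] [LieRing L] [LieAlgebra k L]
  [AddCommGroup M] [Module k M] [FiniteDimensional k M] [LieRingModule L M] [LieModule k L M]
  {h e f : L}

variable (k M) in
lemma isNilpotent_toEnd_f (t : IsSl2Triple h e f) : IsNilpotent (toEnd k L M f) :=
  isNilpotent_of_lie_eq_smul (neg_ne_zero.2 two_ne_zero) (lie_toEnd_h_toEnd_f t)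

lemma exists_int_eq_of_hasEigenvalue (t : IsSl2Triple h e f) {μ : k}
    (hμ : (toEnd k L M h).HasEigenvalue μ) : ∃ n : ℤ, μ = n := by
  obtain ⟨m, hm, hm0⟩ := hμ.exists_hasEigenvector
  have lie_h (j : ℕ) := t.lie_h_pow_toEnd_e (End.mem_eigenspace_iff.1 hm) j
  obtain ⟨N, hN⟩ := isNilpotent_toEnd_f k M t.symm
  obtain ⟨j, hj, hj'⟩ := Nat.exists_not_and_succ_of_not_zero_of_exists
    (p := fun j ↦ (toEnd k L M e ^ j) m = 0) hm0 ⟨N, by simp [hN]⟩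
  have primitive : t.HasPrimitiveVectorWith ((toEnd k L M e ^ j) m) (μ + 2 * j) :=
    ⟨hj, lie_h j, by rwa [IsSl2Triple.lie_e_pow_toEnd_e]⟩
  obtain ⟨l, hl⟩ := primitive.exists_nat
  exact ⟨l - 2 * j, by push_cast; linear_combination hl⟩

lemma mem_eigenspaceFiltration_of_lie_f_lie_e_eq_zero (t : IsSl2Triple h e f) {m : M}
    (hm : ⁅f, ⁅e, m⁆⁆ = 0) : m ∈ eigenspaceFiltration (toEnd k L M h) 0 := by
  obtain ⟨n, hn⟩ := isNilpotent_toEnd_f k M t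
  have annihilated := pow_toEnd_e_pow_toEnd_f (R := k) t hm n
  rw [hn, LinearMap.zero_apply, map_zero, eq_comm,
    smul_eq_zero_iff_right (Nat.cast_ne_zero.2 n.factorial_ne_zero), ← LinearMap.mem_ker,
    ker_aeval_prod_X_sub_C _ Nat.cast_injective] at annihilated
  refine (iSup₂_le fun i _ ↦ ?_ : _ ≤ eigenspaceFiltration (toEnd k L M h) 0) annihilated
  exact_mod_cast eigenspace_le_eigenspaceFiltration (toEnd k L M h) (Int.natCast_nonneg i)

variable (k M) in
lemma ker_e_le_eigenspaceFiltration (t : IsSl2Triple h e f) :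
    LinearMap.ker (toEnd k L M e) ≤ eigenspaceFiltration (toEnd k L M h) 0 := fun m hm ↦
  mem_eigenspaceFiltration_of_lie_f_lie_e_eq_zero t <| by
    rw [show ⁅e, m⁆ = 0 from hm, lie_zero]

lemma eq_zero_of_lie_e_lie_f_eq_zero (t : IsSl2Triple h e f) {n : ℤ} (hn : 0 < n) {m : M}
    (hm : m ∈ (toEnd k L M h).eigenspace (n : k)) (hef : ⁅e, ⁅f, m⁆⁆ = 0) : m = 0 := by
  have hm' : m ∈ (toEnd k L M (-h)).eigenspace ((-n : ℤ) : k) := by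
    rw [End.mem_eigenspace_iff] at hm ⊢
    rw [map_neg, LinearMap.neg_apply, hm, Int.cast_neg, neg_smul]
  exact Submodule.disjoint_def.1
    (disjoint_eigenspace_eigenspaceFiltration _ (neg_neg_of_pos hn)) m hm'
    (mem_eigenspaceFiltration_of_lie_f_lie_e_eq_zero t.symm hef)

variable (k M) in
lemma map_e_eigenspace (t : IsSl2Triple h e f) {n : ℤ} (hn : -1 ≤ n) :
    ((toEnd k L M h).eigenspace (n : k)).map (toEnd k L M e) =
      (toEnd k L M h).eigenspace ((n + 2 : ℤ) : k) := by
  have mapsTo_ef : ∀ x ∈ (toEnd k L M h).eigenspace ((n + 2 : ℤ) : k),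
      (toEnd k L M e * toEnd k L M f) x ∈ (toEnd k L M h).eigenspace ((n + 2 : ℤ) : k) := by
    intro x hx
    simpa using lie_e_mem_eigenspace t (lie_f_mem_eigenspace t hx)
  have injective_ef : Function.Injective ((toEnd k L M e * toEnd k L M f).restrict mapsTo_ef) := by
    rw [injective_iff_map_eq_zero]
    rintro ⟨x, hx⟩ hx0
    exact Subtype.ext
      (eq_zero_of_lie_e_lie_f_eq_zero t (by lia) hx (congrArg Subtype.val hx0))
  refine le_antisymm (Submodule.map_le_iff_le_comap.2 fun x hx ↦ ?_) fun x hx ↦ ?_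
  · simpa using lie_e_mem_eigenspace t hx
  · obtain ⟨⟨y, hy⟩, hyx⟩ := LinearMap.injective_iff_surjective.1 injective_ef ⟨x, hx⟩
    exact ⟨⁅f, y⁆, by simpa using lie_f_mem_eigenspace t hy, congrArg Subtype.val hyx⟩

variable (k M) in
lemma map_e_eigenspaceFiltration (t : IsSl2Triple h e f) {n : ℤ} (hn : -1 ≤ n) :
    (eigenspaceFiltration (toEnd k L M h) n).map (toEnd k L M e) =
      eigenspaceFiltration (toEnd k L M h) (n + 2) := by
  refine le_antisymm ?_ (eigenspaceFiltration_le_iff.2 fun i hi ↦ ?_)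
  · refine Submodule.map_le_iff_le_comap.2 (eigenspaceFiltration_le_iff.2 fun i hi ↦ ?_)
    rw [← Submodule.map_le_iff_le_comap, map_e_eigenspace k M t (hn.trans hi)]
    exact eigenspace_le_eigenspaceFiltration _ (by lia)
  · rw [← sub_add_cancel i 2, ← map_e_eigenspace k M t (by lia)]
    exact Submodule.map_mono (eigenspace_le_eigenspaceFiltration _ (by lia))

variable (k M) in
lemma finrank_ker_e_inf_eigenspaceFiltration (t : IsSl2Triple h e f) {n : ℤ} (hn : -1 ≤ n) :
    finrank k (LinearMap.ker (toEnd k L M e) ⊓ eigenspaceFiltration (toEnd k L M h) n :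
        Submodule k M) =
      finrank k ((toEnd k L M h).eigenspace (n : k)) +
        finrank k ((toEnd k L M h).eigenspace ((n + 1 : ℤ) : k)) := by
  have rank_nullity := finrank_map_add_finrank_ker_inf (toEnd k L M e)
    (eigenspaceFiltration (toEnd k L M h) n)
  rw [map_e_eigenspaceFiltration k M t hn, finrank_eigenspaceFiltration _ n,
    finrank_eigenspaceFiltration _ (n + 1), add_assoc n 1 1, one_add_one_eq_two] at rank_nullity
  lia

variable (k M) in
lemma finrank_ker_e (t : IsSl2Triple h e f) :
    finrank k (LinearMap.ker (toEnd k L M e)) =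
      finrank k ((toEnd k L M h).eigenspace (0 : k)) +
        finrank k ((toEnd k L M h).eigenspace (1 : k)) := by
  have count := finrank_ker_e_inf_eigenspaceFiltration k M t (n := 0) (by lia)
  rwa [inf_eq_left.2 (ker_e_le_eigenspaceFiltration k M t), zero_add, Int.cast_zero,
    Int.cast_one] at count

lemma lie_e_eq_zero_of_mem_ker_h (t : IsSl2Triple h e f) {u : M} (he : ⁅e, ⁅e, u⁆⁆ = 0)
    (hh : ⁅e, u⁆ ∈ LinearMap.ker (toEnd k L M h)) : ⁅e, u⁆ = 0 := by
  have heu : ⁅e, u⁆ ∈ (toEnd k L M h).eigenspace ((0 : ℤ) : k) := by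
    rwa [Int.cast_zero, End.eigenspace_zero]
  have lie_f_eq_zero : ⁅f, ⁅e, u⁆⁆ = 0 := by
    have mem_ker : ⁅e, ⁅f, ⁅e, u⁆⁆⁆ = 0 := by
      rw [leibniz_lie, t.lie_e_f, show ⁅h, ⁅e, u⁆⁆ = 0 from hh, he, lie_zero, add_zero]
    have mem_neg : ⁅f, ⁅e, u⁆⁆ ∈ (toEnd k L M h).eigenspace ((-2 : ℤ) : k) := by
      simpa using lie_f_mem_eigenspace t heu
    exact Submodule.disjoint_def.1 (disjoint_eigenspace_eigenspaceFiltration _ (by lia)) _ mem_neg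
      (ker_e_le_eigenspaceFiltration k M t mem_ker)
  have mem_two : ⁅e, u⁆ ∈ eigenspaceFiltration (toEnd k L M h) (0 + 2) := by
    rw [← map_e_eigenspaceFiltration k M t (by lia)]
    exact ⟨u, mem_eigenspaceFiltration_of_lie_f_lie_e_eq_zero t lie_f_eq_zero, rfl⟩
  exact Submodule.disjoint_def.1 (disjoint_eigenspace_eigenspaceFiltration _ (by lia)) _ heu mem_two

variable (k M) in
lemma ker_e_inf_range_e (t : IsSl2Triple h e f) :
    LinearMap.ker (toEnd k L M e) ⊓ LinearMap.range (toEnd k L M e) =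
      LinearMap.ker (toEnd k L M e) ⊓ eigenspaceFiltration (toEnd k L M h) 1 := by
  set K := LinearMap.ker (toEnd k L M e) ⊓ LinearMap.range (toEnd k L M e)
  have mapsTo_h : ∀ x ∈ K, toEnd k L M h x ∈ K := by
    rintro _ ⟨hx, u, rfl⟩
    have hx : ⁅e, ⁅e, u⁆⁆ = 0 := hx
    refine ⟨?_, ⁅h, u⁆ + 2 • u, ?_⟩
    · simp [lie_e_lie_h t, hx]
    · simp [lie_e_lie_h t]
  have injective_h : Function.Injective ((toEnd k L M h).restrict mapsTo_h) := by
    rw [injective_iff_map_eq_zero]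
    rintro ⟨_, hx, u, rfl⟩ hx0
    exact Subtype.ext (lie_e_eq_zero_of_mem_ker_h (k := k) t hx (congrArg Subtype.val hx0))
  refine le_antisymm (le_inf inf_le_left fun x hx ↦ ?_) (inf_le_inf_left _ ?_)
  · obtain ⟨⟨y, hy⟩, hyx⟩ := LinearMap.injective_iff_surjective.1 injective_h ⟨x, hx⟩
    exact map_eigenspaceFiltration_zero_le _
      ⟨y, ker_e_le_eigenspaceFiltration k M t hy.1, congrArg Subtype.val hyx⟩
  · rw [show (1 : ℤ) = -1 + 2 by lia, ← map_e_eigenspaceFiltration k M t le_rfl]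
    exact LinearMap.map_le_range

lemma eigenspace_h_one_eq_bot (t : IsSl2Triple ((2⁻¹ : k) • h) e f) :
    (toEnd k L M h).eigenspace (1 : k) = ⊥ := by
  by_contra hne
  have hasEigenvalue : (toEnd k L M ((2⁻¹ : k) • h)).HasEigenvalue 2⁻¹ := by
    rwa [End.hasEigenvalue_iff, map_smul, eigenspace_smul _ (inv_ne_zero two_ne_zero),
      inv_mul_cancel₀ (inv_ne_zero two_ne_zero)]
  obtain ⟨n, hn⟩ := exists_int_eq_of_hasEigenvalue t hasEigenvalue
  have two_mul_eq_one : 2 * n = 1 := by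
    apply Int.cast_injective (α := k)
    rw [Int.cast_mul, ← hn, Int.cast_ofNat, mul_inv_cancel₀ two_ne_zero, Int.cast_one]
  lia

lemma finrank_ker_e_of_two_inv_smul (t : IsSl2Triple ((2⁻¹ : k) • h) e f) :
    finrank k (LinearMap.ker (toEnd k L M e)) =
      finrank k ((toEnd k L M h).eigenspace (0 : k)) +
        finrank k ((toEnd k L M h).eigenspace (2 : k)) := by
  rw [finrank_ker_e k M t, map_smul, eigenspace_smul _ (inv_ne_zero two_ne_zero),
    eigenspace_smul _ (inv_ne_zero two_ne_zero), inv_inv, mul_zero, mul_one]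

variable (k M) in
lemma finrank_ker_e_sq (t : IsSl2Triple h e f) :
    finrank k (LinearMap.ker (toEnd k L M e ^ 2)) =
      finrank k (LinearMap.ker (toEnd k L M e)) +
        finrank k (LinearMap.ker (toEnd k L M e) ⊓ eigenspaceFiltration (toEnd k L M h) 1 :
          Submodule k M) := by
  rw [finrank_ker_sq, ker_e_inf_range_e k M t]

end Sl2Module

open LieModule Sl2Module in
theorem stmt_1_general {k L M : Type*} [Field k] [CharZero k] [LieRing L] [LieAlgebra k L]
    [AddCommGroup M] [Module k M] [FiniteDimensional k M] [LieRingModule L M] [LieModule k L M]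
    {h e f e' f' : L} (ht : IsSl2Triple h e f) (ht' : IsSl2Triple ((2⁻¹ : k) • h) e' f') :
    finrank k (LinearMap.ker (toEnd k L M e')) =
      finrank k (LinearMap.ker (toEnd k L M e ^ 2)) ∧
    finrank k (LinearMap.ker (toEnd k L M e ^ 2)) =
      finrank k (LinearMap.ker (toEnd k L M e)) +
        finrank k (LinearMap.ker (toEnd k L M e) ⊓
          ⨆ i ∈ Set.Ici (1 : ℤ), (toEnd k L M h).eigenspace (i : k) : Submodule k M) := by
  have ker_e_sq := finrank_ker_e_sq k M ht
  have ker_e_nil := finrank_ker_e_inf_eigenspaceFiltration k M ht (n := 1) (by lia)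
  rw [Int.cast_one, one_add_one_eq_two, Int.cast_ofNat] at ker_e_nil
  refine ⟨?_, ker_e_sq⟩
  rw [finrank_ker_e_of_two_inv_smul ht', ker_e_sq, finrank_ker_e k M ht, ker_e_nil,
    eigenspace_h_one_eq_bot ht', finrank_bot, add_zero, zero_add]

/-- If `(h,e,f)` is an sl₂-triple with `e` even (all odd eigenspaces of `ad h` vanish) and
`(h/2, e', f')` is also an sl₂-triple, then
`dim ker(ad e') = dim ker((ad e)²) = dim 𝔤^e + dim 𝔤^e_nil`. -/
theorem stmt_1 {k : Type*} [Field k] [CharZero k]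
    {L : Type*} [LieRing L] [LieAlgebra k L] [FiniteDimensional k L]
    {h e f e' f' : L} (ht : IsSl2Triple h e f)
    (heven : ∀ i : ℤ, Odd i → (ad k L h).eigenspace ((i : ℤ) : k) = ⊥)
    (ht' : IsSl2Triple ((2⁻¹ : k) • h) e' f') :
    Module.finrank k (LinearMap.ker (ad k L e')) =
      Module.finrank k (LinearMap.ker ((ad k L e) ^ 2)) ∧
    Module.finrank k (LinearMap.ker ((ad k L e) ^ 2)) =
      Module.finrank k (LinearMap.ker (ad k L e)) +
        Module.finrank k ((LinearMap.ker (ad k L e) ⊓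
          ⨆ i ∈ Set.Ici (1 : ℤ), (ad k L h).eigenspace ((i : ℤ) : k) : Submodule k L)) :=
  stmt_1_general ht ht'
end

section
/- Let 𝔤 be a finite-dimensional Lie algebra over a field of characteristic 0 and let (h,e,f) and (h/2, e', f') both be sl₂-triples in 𝔤. Then ad e and ad e' are nilpotent, and if N denotes the largest integer m ≥ 0 with (ad e)^m ≠ 0 and N' denotes the largest integer m ≥ 0 with (ad e')^m ≠ 0, then N = 2·N'. (The height of e' equals half the height of e.) -/
open LieAlgebra Module

/-!
On a finite-dimensional representation `e` is nilpotent, since the nonzero powers `e ^ n` are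
eigenvectors of the commutator with `h` for the distinct eigenvalues `2 n`.

A nonzero vector `e ^ N x`, with `N` the height of `e` on a representation, has weight `N`,
because `⁅e ^ (N + 1), f⁆ = (N + 1) (h - N) e ^ N`. Conversely every rational weight is at most the
weight of some primitive vector, and a primitive vector `m` of weight `μ` satisfies
`e ^ (N + 1) f ^ (N + 1) m = ∏ i ≤ N, (i + 1) (μ - i) • m`, which forces `μ ∈ {0, …, N}`. So the
height of `e` is the greatest rational eigenvalue of `h`, and halving `h` halves it.
-/

open LieModule (toEnd)

section AssociativeAlgebra

attribute [local instance] LieRing.ofAssociativeRing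

theorem lie_mul_leibniz {A : Type*} [NonUnitalRing A] (a b c : A) :
    ⁅a, b * c⁆ = ⁅a, b⁆ * c + b * ⁅a, c⁆ := by
  simp only [Ring.lie_def, sub_mul, mul_sub, mul_assoc, sub_add_sub_cancel]

theorem mul_lie_leibniz {A : Type*} [NonUnitalRing A] (a b c : A) :
    ⁅a * b, c⁆ = a * ⁅b, c⁆ + ⁅a, c⁆ * b := by
  simp only [Ring.lie_def, sub_mul, mul_sub, mul_assoc, sub_add_sub_cancel]

theorem lie_pow_eq_smul_of_lie_eq_smul {R A : Type*} [CommSemiring R] [Ring A] [Algebra R A]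
    {a b : A} {c : R} (hab : ⁅a, b⁆ = c • b) (n : ℕ) : ⁅a, b ^ n⁆ = (n * c) • b ^ n := by
  induction n with
  | zero => simp [Ring.lie_def]
  | succ n ih =>
    rw [pow_succ, lie_mul_leibniz, ih, hab, smul_mul_assoc, mul_smul_comm, ← pow_succ, ← add_smul,
      Nat.cast_succ, add_one_mul]

theorem isNilpotent_of_lie_eq_smul_s7 {R A : Type*} [CommRing R] [IsDomain R] [CharZero R] [Ring A]
    [Algebra R A] [IsTorsionFree R A] [IsNoetherian R A] {a b : A} {c : R} (hc : c ≠ 0)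
    (hab : ⁅a, b⁆ = c • b) : IsNilpotent b := by
  by_contra hb
  have hasEigenvector (n : ℕ) : (ad R A a).HasEigenvector (n * c) (b ^ n) :=
    ⟨End.mem_eigenspace_iff.mpr (lie_pow_eq_smul_of_lie_eq_smul hab n), fun hn ↦ hb ⟨n, hn⟩⟩
  have injective : Function.Injective fun n : ℕ ↦ (n * c : R) :=
    (mul_left_injective₀ hc).comp Nat.cast_injective
  have := ((ad R A a).eigenvectors_linearIndependent' _ injective _ hasEigenvector).finite
  exact not_finite ℕ

theorem pow_succ_lie_eq_nsmul {A : Type*} [Ring A] {H E F : A} (hHE : ⁅H, E⁆ = 2 • E)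
    (hEF : ⁅E, F⁆ = H) (n : ℕ) :
    ⁅E ^ (n + 1), F⁆ = (n + 1) • (H * E ^ n - n • E ^ n) := by
  induction n with
  | zero => simpa using hEF
  | succ n ih =>
    have commute_H : E ^ (n + 1) * H = H * E ^ (n + 1) - (2 * (n + 1)) • E ^ (n + 1) := by
      have := lie_pow_eq_smul_of_lie_eq_smul hHE (n + 1)
      rw [Ring.lie_def, sub_eq_iff_eq_add] at this
      rw [this, Nat.cast_id]
      module
    rw [pow_succ _ (n + 1), mul_lie_leibniz, hEF, commute_H, ih, smul_mul_assoc, sub_mul,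
      smul_mul_assoc, mul_assoc, ← pow_succ]
    module

end AssociativeAlgebra

section Representation

attribute [local instance] LieRing.ofAssociativeRing

variable {R L M : Type*} [CommRing R] [LieRing L] [LieAlgebra R L]
  [AddCommGroup M] [Module R M] [LieRingModule L M] [LieModule R L M] {h e f : L}

theorem hasEigenvalue_toEnd_h_of_pow_toEnd_e_ne_zero [IsDomain R] [CharZero R] [IsTorsionFree R M]
    (t : IsSl2Triple h e f) {N : ℕ} (hN : toEnd R L M e ^ N ≠ 0)
    (hN_succ : toEnd R L M e ^ (N + 1) = 0) :
    (toEnd R L M h).HasEigenvalue (N : R) := by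
  have commutator := pow_succ_lie_eq_nsmul (H := toEnd R L M h) (E := toEnd R L M e)
    (F := toEnd R L M f) (by rw [← LieHom.map_lie, t.lie_h_e_nsmul, map_nsmul])
    (by rw [← LieHom.map_lie, t.lie_e_f]) N
  have h_mul_pow : toEnd R L M h * toEnd R L M e ^ N = (N : R) • toEnd R L M e ^ N := by
    rw [hN_succ, zero_lie, ← Nat.cast_smul_eq_nsmul R, eq_comm,
      smul_eq_zero_iff_right (Nat.cast_ne_zero.mpr N.succ_ne_zero), sub_eq_zero] at commutator
    rw [commutator, Nat.cast_smul_eq_nsmul]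
  obtain ⟨x, hx⟩ := DFunLike.ne_iff.mp hN
  exact End.hasEigenvalue_of_hasEigenvector
    ⟨End.mem_eigenspace_iff.mpr (LinearMap.congr_fun h_mul_pow x), hx⟩

theorem pow_toEnd_e_pow_toEnd_f_eq_prod_smul {t : IsSl2Triple h e f} {m : M} {μ : R}
    (P : t.HasPrimitiveVectorWith m μ) (n : ℕ) :
    (toEnd R L M e ^ n) ((toEnd R L M f ^ n) m) =
      (∏ i ∈ Finset.range n, ((i + 1) * (μ - i))) • m := by
  induction n with
  | zero => simp
  | succ n ih =>
    rw [pow_succ (toEnd R L M e), End.mul_apply, LieModule.toEnd_apply_apply,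
      P.lie_e_pow_succ_toEnd_f, map_smul, ih, smul_smul, Finset.prod_range_succ_comm]

theorem exists_le_eq_natCast_of_hasPrimitiveVectorWith [IsDomain R] [CharZero R] [IsTorsionFree R M]
    {t : IsSl2Triple h e f} {m : M} {μ : R} (P : t.HasPrimitiveVectorWith m μ) {N : ℕ}
    (hN : toEnd R L M e ^ (N + 1) = 0) : ∃ n ≤ N, μ = n := by
  have prod_eq_zero : ∏ i ∈ Finset.range (N + 1), ((i + 1) * (μ - i)) = 0 := by
    refine (smul_eq_zero_iff_left P.ne_zero).mp ?_
    rw [← pow_toEnd_e_pow_toEnd_f_eq_prod_smul P, hN, LinearMap.zero_apply]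
  obtain ⟨n, hn, factor_eq_zero⟩ := Finset.prod_eq_zero_iff.mp prod_eq_zero
  refine ⟨n, Nat.le_of_lt_succ (Finset.mem_range.mp hn), ?_⟩
  exact sub_eq_zero.mp ((mul_eq_zero_iff_left n.cast_add_one_ne_zero).mp factor_eq_zero)

theorem exists_hasPrimitiveVectorWith_add_two_mul (t : IsSl2Triple h e f) {N : ℕ}
    (hN : toEnd R L M e ^ N = 0) {μ : R} (hμ : (toEnd R L M h).HasEigenvalue μ) :
    ∃ (j : ℕ) (m : M), t.HasPrimitiveVectorWith m (μ + 2 * j) := by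
  obtain ⟨x, hx⟩ := hμ.exists_hasEigenvector
  obtain ⟨j, hj, hj_succ⟩ := Nat.exists_not_and_succ_of_not_zero_of_exists
    (p := fun n ↦ (toEnd R L M e ^ n) x = 0) hx.2 ⟨N, by rw [hN, LinearMap.zero_apply]⟩
  exact ⟨j, (toEnd R L M e ^ j) x, hj, t.lie_h_pow_toEnd_e hx.apply_eq_smul j,
    (IsSl2Triple.lie_e_pow_toEnd_e j).trans hj_succ⟩

end Representation

theorem hasEigenvalue_smul_iff {R V : Type*} [CommRing R] [IsDomain R] [AddCommGroup V]
    [Module R V] [IsTorsionFree R V] {c : R} (hc : c ≠ 0) {T : End R V} {μ : R} :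
    (c • T).HasEigenvalue (c * μ) ↔ T.HasEigenvalue μ := by
  have eigenspace_smul : (c • T).eigenspace (c * μ) = T.eigenspace μ := by
    ext v
    simp [mul_smul, smul_right_inj hc]
  rw [End.hasEigenvalue_iff, End.hasEigenvalue_iff, eigenspace_smul]

section FieldRepresentation

attribute [local instance] LieRing.ofAssociativeRing

variable {k L M : Type*} [Field k] [CharZero k] [LieRing L] [LieAlgebra k L]
  [AddCommGroup M] [Module k M] [LieRingModule L M] [LieModule k L M]

theorem isNilpotent_toEnd_of_lie_eq_smul [FiniteDimensional k M] {x y : L} {c : k}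
    (hc : c ≠ 0) (hxy : ⁅x, y⁆ = c • y) : IsNilpotent (toEnd k L M y) :=
  isNilpotent_of_lie_eq_smul_s7 hc (a := toEnd k L M x) (by rw [← LieHom.map_lie, hxy, map_smul])

theorem isGreatest_ratCast_eigenvalue_toEnd_h {h e f : L} (t : IsSl2Triple h e f) {N : ℕ}
    (hN : toEnd k L M e ^ N ≠ 0) (hN_succ : toEnd k L M e ^ (N + 1) = 0) :
    IsGreatest {q : ℚ | (toEnd k L M h).HasEigenvalue (q : k)} N := by
  refine ⟨?_, fun q hq ↦ ?_⟩
  · simpa using hasEigenvalue_toEnd_h_of_pow_toEnd_e_ne_zero t hN hN_succ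
  · obtain ⟨j, m, P⟩ := exists_hasPrimitiveVectorWith_add_two_mul t hN_succ hq
    obtain ⟨n, hnN, weight_eq⟩ := exists_le_eq_natCast_of_hasPrimitiveVectorWith P hN_succ
    calc q ≤ q + 2 * j := le_add_of_nonneg_right (by positivity)
      _ = n := by exact_mod_cast weight_eq
      _ ≤ N := by exact_mod_cast hnN

end FieldRepresentation

theorem stmt_7_general {k L M : Type*} [Field k] [CharZero k] [LieRing L] [LieAlgebra k L]
    [AddCommGroup M] [Module k M] [LieRingModule L M] [LieModule k L M]
    {h e f e' f' : L} (ht : IsSl2Triple h e f) (ht' : IsSl2Triple ((2⁻¹ : k) • h) e' f')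
    {N N' : ℕ} (hN : toEnd k L M e ^ N ≠ 0) (hN_succ : toEnd k L M e ^ (N + 1) = 0)
    (hN' : toEnd k L M e' ^ N' ≠ 0) (hN'_succ : toEnd k L M e' ^ (N' + 1) = 0) :
    N = 2 * N' := by
  have greatest := isGreatest_ratCast_eigenvalue_toEnd_h ht hN hN_succ
  have greatest' := isGreatest_ratCast_eigenvalue_toEnd_h ht' hN' hN'_succ
  have halve_eigenvalue (q : ℚ) : (toEnd k L M ((2⁻¹ : k) • h)).HasEigenvalue ((2⁻¹ * q : ℚ) : k) ↔
      (toEnd k L M h).HasEigenvalue (q : k) := by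
    rw [map_smul, Rat.cast_mul, Rat.cast_inv, Rat.cast_ofNat,
      hasEigenvalue_smul_iff (inv_ne_zero two_ne_zero)]
  have half_le : (2⁻¹ * N : ℚ) ≤ N' := greatest'.2 ((halve_eigenvalue N).mpr greatest.1)
  have two_mul_le : (2 * N' : ℚ) ≤ N :=
    greatest.2 ((halve_eigenvalue (2 * N')).mp (by simpa using greatest'.1))
  have : (N : ℚ) = 2 * N' := by linarith
  exact_mod_cast this

/-- If `(h,e,f)` and `(h/2,e',f')` are both sl₂-triples in a finite-dimensional char-0
Lie algebra, then `ad e` and `ad e'` are nilpotent and the height of `e` is twice the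
height of `e'`. -/
theorem stmt_7 {k : Type*} [Field k] [CharZero k]
    {L : Type*} [LieRing L] [LieAlgebra k L] [FiniteDimensional k L]
    {h e f e' f' : L} (ht : IsSl2Triple h e f)
    (ht' : IsSl2Triple ((2⁻¹ : k) • h) e' f') :
    IsNilpotent (ad k L e) ∧ IsNilpotent (ad k L e') ∧
    ∀ N N' : ℕ, (ad k L e) ^ N ≠ 0 → (ad k L e) ^ (N + 1) = 0 →
      (ad k L e') ^ N' ≠ 0 → (ad k L e') ^ (N' + 1) = 0 → N = 2 * N' :=
  ⟨isNilpotent_toEnd_of_lie_eq_smul two_ne_zero (ht.lie_h_e_smul k),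
    isNilpotent_toEnd_of_lie_eq_smul two_ne_zero (ht'.lie_h_e_smul k),
    fun _ _ ↦ stmt_7_general ht ht'⟩
end
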